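/- Let M be the 27 × 27 integer matrix obtained by stacking vertically the three Kronecker products r ⊗ I₃ ⊗ I₃, I₃ ⊗ r ⊗ I₃, and I₃ ⊗ I₃ ⊗ r, where I₃ is the 3 × 3 identity matrix and r = (1, 1, 1). Let x_p = (0,0,0,1,51,2,0,0,0,1,51,2,51,2654,102,0,106,2,0,0,0,0,106,2,2,0,0) ∈ ℤ²⁷. Then the set of vectors x ∈ ℤ²⁷ with all coordinates nonnegative satisfying M x = M x_p and x₂₇ = 0 has exactly 3 elements. -/

import Mathlib

/-!
View `x` as a `3 × 3 × 3` array. The equation `M x = M x_p` says that `x` and `x_p` have the same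
sums along every axis-parallel line (`mulVec_eq_iff`). In the layer `i₁ = 1` the lines
`(1, 1, *)` and `(1, 3, *)` sum to zero, so nonnegativity kills them and the whole layer is forced.
In the layer `i₁ = 3` the line `(3, 1, *)` likewise vanishes, so together with `x₂₇ = 0` a single
free parameter `t = x₂₆` remains; the middle layer is then determined by the lines in the first
direction. Hence the solutions are `solution t`, and since `x₂₅ = 2 - t`, nonnegativity amounts to
`0 ≤ t ≤ 2`, which leaves three values.
-/

open Matrix Kronecker

/-- The 1 × 3 all-ones row vector `r = (1, 1, 1)`. -/
def rOnes : Matrix (Fin 1) (Fin 3) ℤ := Matrix.of fun _ _ => 1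

/-- Lexicographic identification of index triples `(i₁, i₂, i₃)` with `Fin 27`
(first coordinate most significant), matching the lexicographic ordering of the triples
`(i₁, i₂, i₃) ∈ {1, 2, 3}³` used to index the 27 coordinates. -/
def colEquiv : (Fin 3 × Fin 3) × Fin 3 ≃ Fin 27 :=
  (Equiv.prodCongr finProdFinEquiv (Equiv.refl (Fin 3))).trans finProdFinEquiv

def rowEquiv1 : (Fin 1 × Fin 3) × Fin 3 ≃ Fin 9 :=
  (Equiv.prodCongr finProdFinEquiv (Equiv.refl (Fin 3))).trans finProdFinEquiv

def rowEquiv2 : (Fin 3 × Fin 1) × Fin 3 ≃ Fin 9 :=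
  (Equiv.prodCongr finProdFinEquiv (Equiv.refl (Fin 3))).trans finProdFinEquiv

def rowEquiv3 : (Fin 3 × Fin 3) × Fin 1 ≃ Fin 9 :=
  (Equiv.prodCongr finProdFinEquiv (Equiv.refl (Fin 1))).trans finProdFinEquiv

/-- The 27 × 27 matrix obtained by stacking vertically the three Kronecker products
`r ⊗ I₃ ⊗ I₃`, `I₃ ⊗ r ⊗ I₃` and `I₃ ⊗ I₃ ⊗ r`, where `I₃` is the 3 × 3 identity matrix and
`r = (1, 1, 1)` is the 1 × 3 all-ones row, with columns indexed lexicographically by triples. -/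
def M : Matrix (Fin 27) (Fin 27) ℤ :=
  Matrix.reindex
    ((rowEquiv1.sumCongr (rowEquiv2.sumCongr rowEquiv3)).trans
      (((Equiv.refl (Fin 9)).sumCongr finSumFinEquiv).trans finSumFinEquiv))
    colEquiv
    (Matrix.fromRows
      (rOnes ⊗ₖ (1 : Matrix (Fin 3) (Fin 3) ℤ) ⊗ₖ (1 : Matrix (Fin 3) (Fin 3) ℤ))
      (Matrix.fromRows
        ((1 : Matrix (Fin 3) (Fin 3) ℤ) ⊗ₖ rOnes ⊗ₖ (1 : Matrix (Fin 3) (Fin 3) ℤ))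
        ((1 : Matrix (Fin 3) (Fin 3) ℤ) ⊗ₖ (1 : Matrix (Fin 3) (Fin 3) ℤ) ⊗ₖ rOnes)))

/-- The particular solution of block 221 (coordinates indexed lexicographically by triples,
coordinate 27 corresponding to (3,3,3)). -/
def xp : Fin 27 → ℤ := ![0,0,0,1,51,2,0,0,0,1,51,2,51,2654,102,0,106,2,0,0,0,0,106,2,2,0,0]

/-- The arrays `x` and `y` have equal sums along all axis-parallel lines. -/
def SameLineSums (x y : Fin 27 → ℤ) : Prop :=
  (∀ j k, ∑ i, x (colEquiv ((i, j), k)) = ∑ i, y (colEquiv ((i, j), k))) ∧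
  (∀ i k, ∑ j, x (colEquiv ((i, j), k)) = ∑ j, y (colEquiv ((i, j), k))) ∧
  (∀ i j, ∑ k, x (colEquiv ((i, j), k)) = ∑ k, y (colEquiv ((i, j), k)))

lemma mulVec_eq_iff (x y : Fin 27 → ℤ) : M.mulVec x = M.mulVec y ↔ SameLineSums x y := by
  -- Undo the reindexing of the rows, so that each row is labelled by a line.
  rw [funext_iff, ← ((rowEquiv1.sumCongr (rowEquiv2.sumCongr rowEquiv3)).trans
      (((Equiv.refl (Fin 9)).sumCongr finSumFinEquiv).trans finSumFinEquiv)).forall_congr_right]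
  simp only [M, Matrix.mulVec, dotProduct, Matrix.reindex_apply, Matrix.submatrix_apply,
    Equiv.symm_apply_apply, ← colEquiv.sum_comp, Sum.forall, Prod.forall, Matrix.fromRows_apply_inl,
    Matrix.fromRows_apply_inr, Matrix.kroneckerMap_apply, Fintype.sum_prod_type, rOnes,
    Matrix.of_apply, Matrix.one_apply, SameLineSums]
  simp

/-- The one-parameter family of arrays with the line sums of `xp`, vanishing at `(3, 3, 3)`, and
agreeing with `xp` in the layer `i₁ = 1` and on the line `(3, 1, *)`; `xp` itself is `t = 0`. -/
def solution (t : ℤ) : Fin 27 → ℤ :=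
  ![0, 0, 0, 1, 51, 2, 0, 0, 0,
    1, 51, 2, 51 - t, 2654 + t, 102, t, 106 - t, 2,
    0, 0, 0, t, 106 - t, 2, 2 - t, t, 0]

lemma solution_injective : Function.Injective solution := fun _ _ h => congrFun h 25

lemma solution_nonneg {t : ℤ} (ht : 0 ≤ t ∧ t ≤ 2) (i : Fin 27) : 0 ≤ solution t i := by
  obtain ⟨h0, h2⟩ := ht
  fin_cases i <;> simp [solution] <;> omega

/-- The values of `colEquiv`, in a form that lets line sums be expanded coordinate by coordinate. -/
lemma colEquiv_eq (i j k : Fin 3) :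
    colEquiv ((i, j), k) = ⟨k + 3 * (j + 3 * i), by omega⟩ := rfl

lemma solution_lineSums (t : ℤ) : SameLineSums (solution t) xp := by
  refine ⟨fun j k => ?_, fun i k => ?_, fun i j => ?_⟩
  · fin_cases j <;> fin_cases k <;> simp [Fin.sum_univ_three, colEquiv_eq, solution, xp] <;> ring
  · fin_cases i <;> fin_cases k <;> simp [Fin.sum_univ_three, colEquiv_eq, solution, xp] <;> ring
  · fin_cases i <;> fin_cases j <;> simp [Fin.sum_univ_three, colEquiv_eq, solution, xp]

lemma eq_solution_of_lineSums {x : Fin 27 → ℤ} (hnonneg : ∀ i, 0 ≤ x i)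
    (hsums : SameLineSums x xp) (hlast : x 26 = 0) :
    ∃ t, (0 ≤ t ∧ t ≤ 2) ∧ solution t = x := by
  obtain ⟨h1, h2, h3⟩ := hsums
  simp [Fin.forall_fin_succ, Fin.sum_univ_three, colEquiv_eq, xp] at h1 h2 h3
  simp [Fin.forall_fin_succ] at hnonneg
  refine ⟨x 25, by omega, ?_⟩
  ext i
  fin_cases i <;> simp [solution] <;> omega

/-- The set of nonnegative integer vectors \`x\` with \`M x = M x_p\` and \`x₂₇ = 0\` (block 221) has exactly 3 elements. -/
theorem block221_solution_count :
    {x : Fin 27 → ℤ | (∀ i, 0 ≤ x i) ∧ M.mulVec x = M.mulVec xp ∧ x 26 = 0}.ncard = 3 := by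
  have himage : {x : Fin 27 → ℤ | (∀ i, 0 ≤ x i) ∧ M.mulVec x = M.mulVec xp ∧ x 26 = 0} =
      Set.image solution (Finset.Icc (0 : ℤ) 2 : Finset ℤ) := by
    ext x
    simp only [Set.mem_ofPred_eq, mulVec_eq_iff, Set.mem_image, Finset.coe_Icc, Set.mem_Icc]
    constructor
    · rintro ⟨hnonneg, hsums, hlast⟩
      exact eq_solution_of_lineSums hnonneg hsums hlast
    · rintro ⟨t, ht, rfl⟩
      exact ⟨solution_nonneg ht, solution_lineSums t, rfl⟩
  rw [himage, Set.ncard_image_of_injective _ solution_injective, Set.ncard_coe_finset]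
  rfl
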